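/- (Global lower bound in Theorem 1's proof.) Let d, k0, k be positive integers with k > k0, let Θ be a compact subset of ℝ^d × S_d^+ × ℝ^d × ℝ × ℝ_{>0}, let β ∈ (0, 1/k], and let G0 = Σ_{j=1}^{k0} π_j^0 δ_{θ_j^0} be a mixing measure with pairwise distinct components θ_j^0 ∈ Θ and weights π_j^0 > 0 summing to 1, with c_j^0 ≠ 0 for every j. Then for every ε > 0, the infimum of V(p_G, p_{G0}) over all G ∈ O_{k,β}(Θ) with D̄(G, G0) > ε is strictly positive. -/

import Mathlib

open Matrix MeasureTheory

/-- The parameter space `ℝ^d × (d×d matrices) × ℝ^d × ℝ × ℝ` of one expert component. -/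
abbrev Param (d : ℕ) : Type :=
  (Fin d → ℝ) × Matrix (Fin d) (Fin d) ℝ × (Fin d → ℝ) × ℝ × ℝ

/-- The univariate Gaussian density with mean `b` and variance `ν`. -/
noncomputable def gauss1 (y b ν : ℝ) : ℝ :=
  (2 * Real.pi * ν) ^ (-(1 : ℝ) / 2) * Real.exp (-((y - b) ^ 2) / (2 * ν))

/-- The `d`-variate Gaussian density with mean `c` and covariance matrix `Γ`. -/
noncomputable def gaussd (d : ℕ) (x c : Fin d → ℝ) (Γ : Matrix (Fin d) (Fin d) ℝ) : ℝ :=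
  (2 * Real.pi) ^ (-(d : ℝ) / 2) * Γ.det ^ (-(1 : ℝ) / 2) *
    Real.exp (-(1 / 2) * ((x - c) ⬝ᵥ (Γ⁻¹ *ᵥ (x - c))))

/-- The joint density of one component:
`F(x, y | (c, Γ, a, b, ν)) = N_d(x; c, Γ) · φ(y; aᵀx + b, ν)`. -/
noncomputable def Fcomp {d : ℕ} (θ : Param d) (x : Fin d → ℝ) (y : ℝ) : ℝ :=
  gaussd d x θ.1 θ.2.1 * gauss1 y (θ.2.2.1 ⬝ᵥ x + θ.2.2.2.1) θ.2.2.2.2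

/-- The total variation distance `V(p, q) = (1/2)∫|p − q|` between two densities on
`ℝ^d × ℝ`. -/
noncomputable def TV {d : ℕ} (p q : (Fin d → ℝ) × ℝ → ℝ) : ℝ :=
  (1 / 2) * ∫ z, |p z - q z|

/-- The Euclidean norm of a vector in `ℝ^d`. -/
noncomputable def vnorm {d : ℕ} (v : Fin d → ℝ) : ℝ :=
  Real.sqrt (∑ i, (v i) ^ 2)

/-- The Frobenius norm of a `d×d` real matrix. -/
noncomputable def mnorm {d : ℕ} (M : Matrix (Fin d) (Fin d) ℝ) : ℝ :=
  Real.sqrt (∑ i, ∑ j, (M i j) ^ 2)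

/-- The Euclidean distance on the parameter space (Frobenius norm on the matrix
coordinate). -/
noncomputable def pdist {d : ℕ} (θ η : Param d) : ℝ :=
  Real.sqrt ((vnorm (θ.1 - η.1)) ^ 2 + (mnorm (θ.2.1 - η.2.1)) ^ 2 +
    (vnorm (θ.2.2.1 - η.2.2.1)) ^ 2 + (θ.2.2.2.1 - η.2.2.2.1) ^ 2 +
    (θ.2.2.2.2 - η.2.2.2.2) ^ 2)

open Classical in
/-- The Voronoi cell `A_j(G)` generated by the true component `θ0 j`: the indices `i`
of the fitted components whose parameter `θ i` is at least as close to `θ0 j` as to any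
other true component. -/
noncomputable def cell {d k0 : ℕ} (θ0 : Fin k0 → Param d) {m : ℕ}
    (θ : Fin m → Param d) (j : Fin k0) : Finset (Fin m) :=
  Finset.univ.filter (fun i => ∀ l, l ≠ j → pdist (θ i) (θ0 j) ≤ pdist (θ i) (θ0 l))

/-- The `s`-th equation of the bar-system:
`Σ_{l=1}^m Σ_{n₁+2n₂=s} p_l² q_{1,l}^{n₁} q_{2,l}^{n₂} / (n₁!·n₂!)`. -/
noncomputable def barEq (m : ℕ) (p q1 q2 : Fin m → ℝ) (s : ℕ) : ℝ :=
  ∑ l : Fin m,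
    ∑ nn ∈ (Finset.range (s + 1) ×ˢ Finset.range (s + 1)).filter
        (fun nn => nn.1 + 2 * nn.2 = s),
      p l ^ 2 * q1 l ^ nn.1 * q2 l ^ nn.2 /
        ((nn.1.factorial : ℝ) * (nn.2.factorial : ℝ))

/-- The bar-system of order `(m, r)` admits a non-trivial solution: all `p_l ≠ 0`,
some `q_{1,l} ≠ 0`, and the equations hold for every `s = 1, …, r`. -/
def barSol (m r : ℕ) : Prop :=
  ∃ p q1 q2 : Fin m → ℝ,
    (∀ l, p l ≠ 0) ∧ (∃ l, q1 l ≠ 0) ∧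
    ∀ s : ℕ, 1 ≤ s → s ≤ r → barEq m p q1 q2 s = 0

/-- `r̄(m)`: the smallest positive integer `r` such that the bar-system of order
`(m, r)` admits no non-trivial solution. -/
noncomputable def rbar (m : ℕ) : ℕ := sInf {r : ℕ | 1 ≤ r ∧ ¬ barSol m r}

/-- The Voronoi loss `D̄(G, G0)` of the Type I setting. -/
noncomputable def Dbar {d k0 : ℕ} (π0 : Fin k0 → ℝ) (θ0 : Fin k0 → Param d)
    {m : ℕ} (w : Fin m → ℝ) (θ : Fin m → Param d) : ℝ :=
  (∑ j : Fin k0,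
    if 1 < (cell θ0 θ j).card then
      ∑ i ∈ cell θ0 θ j, w i *
        (vnorm ((θ i).1 - (θ0 j).1) ^ ((rbar (cell θ0 θ j).card : ℝ))
          + mnorm ((θ i).2.1 - (θ0 j).2.1) ^ ((rbar (cell θ0 θ j).card : ℝ) / 2)
          + vnorm ((θ i).2.2.1 - (θ0 j).2.2.1) ^ (2 : ℕ)
          + |(θ i).2.2.2.1 - (θ0 j).2.2.2.1| ^ ((rbar (cell θ0 θ j).card : ℝ))
          + |(θ i).2.2.2.2 - (θ0 j).2.2.2.2| ^ ((rbar (cell θ0 θ j).card : ℝ) / 2))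
    else 0)
  + (∑ j : Fin k0,
    if (cell θ0 θ j).card = 1 then
      ∑ i ∈ cell θ0 θ j, w i *
        (vnorm ((θ i).1 - (θ0 j).1) + mnorm ((θ i).2.1 - (θ0 j).2.1)
          + vnorm ((θ i).2.2.1 - (θ0 j).2.2.1) + |(θ i).2.2.2.1 - (θ0 j).2.2.2.1|
          + |(θ i).2.2.2.2 - (θ0 j).2.2.2.2|)
    else 0)
  + ∑ j : Fin k0, |(∑ i ∈ cell θ0 θ j, w i) - π0 j|

open Filter Topology

/-! ### Linear independence of exponentials of quadratics -/

lemma tendsto_exp_quadratic_of_lex_neg {b a : ℝ} (h : b < 0 ∨ (b = 0 ∧ a < 0)) :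
    Tendsto (fun t : ℝ => Real.exp (b * t ^ 2 + a * t)) atTop (𝓝 0) := by
  refine Real.tendsto_exp_atBot.comp ?_
  rcases h with h | ⟨rfl, h⟩
  · have h1 : Tendsto (fun t : ℝ => b * t + a) atTop atBot :=
      tendsto_atBot_add_const_right _ _ (tendsto_id.const_mul_atTop_of_neg h)
    refine (tendsto_id.atTop_mul_atBot₀ h1).congr fun t => ?_
    simp only [id]; ring
  · refine (tendsto_id.const_mul_atTop_of_neg h).congr fun t => ?_
    simp

lemma exp_quadratic_linearIndependent (T : Finset (ℝ ×ₗ ℝ)) (c : ℝ ×ₗ ℝ → ℝ)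
    (h : ∀ t : ℝ, ∑ γ ∈ T,
      c γ * Real.exp ((ofLex γ).1 * t ^ 2 + (ofLex γ).2 * t) = 0) :
    ∀ γ ∈ T, c γ = 0 := by
  by_contra! hne
  obtain ⟨γ₁, hγ₁, hc₁⟩ := hne
  obtain ⟨γ, hγ, hmax⟩ := (T.filter (fun γ => c γ ≠ 0)).exists_max_image id
    ⟨γ₁, Finset.mem_filter.2 ⟨hγ₁, hc₁⟩⟩
  obtain ⟨hγT, hγc⟩ := Finset.mem_filter.1 hγ
  have hlim : Tendsto (fun t : ℝ => ∑ η ∈ T, c η * Real.exp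
      (((ofLex η).1 - (ofLex γ).1) * t ^ 2 + ((ofLex η).2 - (ofLex γ).2) * t)) atTop
      (𝓝 (∑ η ∈ T, if η = γ then c γ else 0)) := by
    refine tendsto_finsetSum _ fun η hη => ?_
    by_cases hηγ : η = γ
    · subst hηγ; simp
    by_cases hcη : c η = 0
    · simp [hcη, hηγ]
    have hlt : η < γ := lt_of_le_of_ne (hmax η (Finset.mem_filter.2 ⟨hη, hcη⟩)) hηγ
    rw [if_neg hηγ]
    have := (tendsto_exp_quadratic_of_lex_neg (b := (ofLex η).1 - (ofLex γ).1)
      (a := (ofLex η).2 - (ofLex γ).2) ?_).const_mul (c η)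
    · simpa using this
    · rcases Prod.Lex.lt_iff.1 hlt with h | ⟨h, h'⟩
      · exact Or.inl (sub_neg.2 h)
      · exact Or.inr ⟨sub_eq_zero.2 h, sub_neg.2 h'⟩
  have hzero : (fun t : ℝ => ∑ η ∈ T, c η * Real.exp
      (((ofLex η).1 - (ofLex γ).1) * t ^ 2 + ((ofLex η).2 - (ofLex γ).2) * t)) =
      fun _ => 0 := by
    funext t
    rw [← zero_mul (Real.exp (-((ofLex γ).1 * t ^ 2 + (ofLex γ).2 * t))), ← h t,
      Finset.sum_mul]
    refine Finset.sum_congr rfl fun η _ => ?_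
    rw [mul_assoc, ← Real.exp_add]
    ring_nf
  rw [hzero] at hlim
  have := tendsto_nhds_unique hlim tendsto_const_nhds
  rw [Finset.sum_ite_eq' T γ, if_pos hγT] at this
  exact hγc this

open Classical in
lemma sum_coeff_eq_zero_of_sum_exp_quadratic {ι : Type*} [Fintype ι] (c b a : ι → ℝ)
    (h : ∀ t : ℝ, ∑ i, c i * Real.exp (b i * t ^ 2 + a i * t) = 0) (i₀ : ι) :
    ∑ i with b i = b i₀ ∧ a i = a i₀, c i = 0 := by
  let g : ι → ℝ ×ₗ ℝ := fun i => toLex (b i, a i)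
  have key := exp_quadratic_linearIndependent (Finset.univ.image g)
    (fun γ => ∑ i with g i = γ, c i) (fun t => by
      rw [← h t, ← Finset.sum_fiberwise_of_maps_to
        (fun i _ => Finset.mem_image_of_mem g (Finset.mem_univ i))]
      refine Finset.sum_congr rfl fun γ _ => ?_
      rw [Finset.sum_mul]
      refine Finset.sum_congr rfl fun i hi => ?_
      rw [← (Finset.mem_filter.1 hi).2]
      rfl) (g i₀) (Finset.mem_image_of_mem g (Finset.mem_univ i₀))
  rw [← key]
  refine Finset.sum_congr (Finset.filter_congr fun i _ => ?_) fun _ _ => rfl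
  simp [g, Prod.ext_iff]

/-! ### Finiteness of `rbar` -/

lemma hasSum_exp_quadratic (q₁ q₂ t : ℝ) :
    HasSum (fun s : ℕ => ∑ nn ∈ (Finset.range (s + 1) ×ˢ Finset.range (s + 1)).filter
        (fun nn => nn.1 + 2 * nn.2 = s),
        t ^ s * (q₁ ^ nn.1 * q₂ ^ nn.2 / ((nn.1.factorial : ℝ) * (nn.2.factorial : ℝ))))
      (Real.exp (q₂ * t ^ 2 + q₁ * t)) := by
  have h₁ := NormedSpace.expSeries_div_hasSum_exp (q₁ * t)
  have h₂ := NormedSpace.expSeries_div_hasSum_exp (q₂ * t ^ 2)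
  have h₃ := h₁.mul h₂ (summable_mul_of_summable_norm h₁.summable.norm h₂.summable.norm)
  rw [← Real.exp_eq_exp_ℝ, ← Real.exp_add, add_comm (q₁ * t)] at h₃
  refine (((Equiv.sigmaFiberEquiv (fun nn : ℕ × ℕ => nn.1 + 2 * nn.2)).hasSum_iff.mpr
    h₃).sigma fun s => ?_)
  have hset : ∀ nn : ℕ × ℕ, nn ∈ (Finset.range (s + 1) ×ˢ Finset.range (s + 1)).filter
      (fun nn => nn.1 + 2 * nn.2 = s) ↔ nn.1 + 2 * nn.2 = s := by
    intro nn
    simp only [Finset.mem_filter, Finset.mem_product, Finset.mem_range]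
    omega
  let e : {nn // nn ∈ (Finset.range (s + 1) ×ˢ Finset.range (s + 1)).filter
      (fun nn => nn.1 + 2 * nn.2 = s)} ≃ {nn : ℕ × ℕ // nn.1 + 2 * nn.2 = s} :=
    Equiv.subtypeEquivRight hset
  rw [← e.hasSum_iff]
  have := Finset.hasSum ((Finset.range (s + 1) ×ˢ Finset.range (s + 1)).filter
    (fun nn => nn.1 + 2 * nn.2 = s)) (fun nn : ℕ × ℕ =>
      (q₁ * t) ^ nn.1 / (nn.1.factorial : ℝ) * ((q₂ * t ^ 2) ^ nn.2 / (nn.2.factorial : ℝ)))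
  convert! this using 1
  refine Finset.sum_congr rfl fun nn hnn => ?_
  rw [← (hset nn).1 hnn, mul_pow, mul_pow, ← pow_mul, pow_add]
  field_simp

lemma hasSum_barEq (m : ℕ) (p q1 q2 : Fin m → ℝ) (t : ℝ) :
    HasSum (fun s => t ^ s * barEq m p q1 q2 s)
      (∑ l, p l ^ 2 * Real.exp (q2 l * t ^ 2 + q1 l * t)) := by
  refine (hasSum_sum fun l (_ : l ∈ Finset.univ) =>
    (hasSum_exp_quadratic (q1 l) (q2 l) t).mul_left (p l ^ 2)).congr_fun ?_
  intro s
  simp only [barEq, Finset.mul_sum]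
  refine Finset.sum_congr rfl fun l _ => Finset.sum_congr rfl fun nn _ => ?_
  ring

lemma not_forall_barEq_eq_zero (m : ℕ) (p q1 q2 : Fin m → ℝ) (hp : ∀ l, p l ≠ 0)
    (hq : ∃ l, q1 l ≠ 0) : ¬ ∀ s : ℕ, 1 ≤ s → barEq m p q1 q2 s = 0 := by
  classical
  intro h
  obtain ⟨l₀, hl₀⟩ := hq
  have hconst : ∀ t : ℝ, ∑ l, p l ^ 2 * Real.exp (q2 l * t ^ 2 + q1 l * t) =
      barEq m p q1 q2 0 := by
    intro t
    refine (hasSum_barEq m p q1 q2 t).unique ?_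
    convert! hasSum_single (f := fun s => t ^ s * barEq m p q1 q2 s) 0 ?_ using 1
    · simp
    · intro s hs
      rw [h s (Nat.one_le_iff_ne_zero.2 hs), mul_zero]
  have key := sum_coeff_eq_zero_of_sum_exp_quadratic (ι := Option (Fin m))
    (fun o => o.elim (-barEq m p q1 q2 0) fun l => p l ^ 2) (fun o => o.elim 0 q2)
    (fun o => o.elim 0 q1) (fun t => by simp [Fintype.sum_option, hconst]) (some l₀)
  have hpos : 0 < ∑ o : Option (Fin m) with
      o.elim 0 q2 = (some l₀).elim 0 q2 ∧ o.elim 0 q1 = (some l₀).elim 0 q1,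
      o.elim (-barEq m p q1 q2 0) fun l => p l ^ 2 := by
    refine Finset.sum_pos (fun o ho => ?_) ⟨some l₀, Finset.mem_filter.2 ⟨Finset.mem_univ _, rfl, rfl⟩⟩
    cases o with
    | none => exact absurd (Finset.mem_filter.1 ho).2.2.symm hl₀
    | some l => exact sq_pos_of_ne_zero (hp l)
  exact hpos.ne' key

lemma exists_not_barSol (m : ℕ) : ∃ r : ℕ, 1 ≤ r ∧ ¬ barSol m r := by
  let P : ℕ → MvPolynomial (Fin m × Fin 3) ℝ := fun s =>
    ∑ l : Fin m, ∑ nn ∈ (Finset.range (s + 1) ×ˢ Finset.range (s + 1)).filter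
        (fun nn => nn.1 + 2 * nn.2 = s),
      MvPolynomial.X (l, 0) ^ 2 * MvPolynomial.X (l, 1) ^ nn.1 * MvPolynomial.X (l, 2) ^ nn.2 *
        MvPolynomial.C (((nn.1.factorial : ℝ) * (nn.2.factorial : ℝ))⁻¹)
  let I : ℕ →o Ideal (MvPolynomial (Fin m × Fin 3) ℝ) :=
    ⟨fun r => Ideal.span (Set.image P (Set.Icc 1 r)), fun a b hab =>
      Ideal.span_mono (Set.image_mono (Set.Icc_subset_Icc_right hab))⟩
  obtain ⟨N, hN⟩ := monotone_stabilizes_iff_noetherian.2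
    (inferInstance : IsNoetherianRing (MvPolynomial (Fin m × Fin 3) ℝ)) I
  refine ⟨N + 1, by omega, ?_⟩
  rintro ⟨p, q1, q2, hp, hq, h⟩
  let φ := MvPolynomial.eval (fun x : Fin m × Fin 3 => ![p x.1, q1 x.1, q2 x.1] x.2)
  have hφ : ∀ s, φ (P s) = barEq m p q1 q2 s := by
    intro s
    simp [φ, P, barEq, div_eq_mul_inv]
  have hker : I N ≤ RingHom.ker φ := by
    refine Ideal.span_le.2 ?_
    rintro _ ⟨s, ⟨hs1, hsN⟩, rfl⟩
    exact (hφ s).trans (h s hs1 (by omega))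
  refine not_forall_barEq_eq_zero m p q1 q2 hp hq fun s hs => ?_
  rw [← hφ s]
  refine hker ?_
  have hmem : P s ∈ I (max N s) :=
    Ideal.subset_span ⟨s, ⟨hs, le_max_right _ _⟩, rfl⟩
  rwa [← hN _ (le_max_left N s)] at hmem

lemma rbar_pos (m : ℕ) : 0 < rbar m :=
  (Nat.sInf_mem (s := {r : ℕ | 1 ≤ r ∧ ¬ barSol m r}) (exists_not_barSol m)).1

/-! ### Identifiability of Gaussian components -/

/-- The parameters of non-degenerate components: symmetric positive definite covariance and
positive variance. -/
def IsRegularParam {d : ℕ} (θ : Param d) : Prop :=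
  θ.2.1.IsSymm ∧ θ.2.1.PosDef ∧ 0 < θ.2.2.2.2

/-- The quadratic part of the exponent of `Fcomp θ`. -/
noncomputable def quadPart {d : ℕ} (θ : Param d) (z : (Fin d → ℝ) × ℝ) : ℝ :=
  -(1 / 2) * (z.1 ⬝ᵥ (θ.2.1⁻¹ *ᵥ z.1)) - (z.2 - θ.2.2.1 ⬝ᵥ z.1) ^ 2 / (2 * θ.2.2.2.2)

/-- The linear part of the exponent of `Fcomp θ`. -/
noncomputable def linPart {d : ℕ} (θ : Param d) (z : (Fin d → ℝ) × ℝ) : ℝ :=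
  z.1 ⬝ᵥ (θ.2.1⁻¹ *ᵥ θ.1) + (z.2 - θ.2.2.1 ⬝ᵥ z.1) * θ.2.2.2.1 / θ.2.2.2.2

lemma dotProduct_mulVec_comm_of_isSymm {d : ℕ} {M : Matrix (Fin d) (Fin d) ℝ} (hM : M.IsSymm)
    (x y : Fin d → ℝ) : x ⬝ᵥ (M *ᵥ y) = y ⬝ᵥ (M *ᵥ x) := by
  rw [dotProduct_mulVec, ← mulVec_transpose, hM.eq, dotProduct_comm]

lemma isSymm_inv {d : ℕ} {M : Matrix (Fin d) (Fin d) ℝ} (hM : M.IsSymm) : M⁻¹.IsSymm := by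
  rw [Matrix.IsSymm, transpose_nonsing_inv, hM.eq]

lemma Fcomp_pos {d : ℕ} {θ : Param d} (hθ : IsRegularParam θ) (x : Fin d → ℝ) (y : ℝ) :
    0 < Fcomp θ x y := by
  have h1 := hθ.2.1.det_pos
  have h2 := hθ.2.2
  unfold Fcomp gaussd gauss1
  positivity

lemma Fcomp_smul {d : ℕ} {θ : Param d} (hθ : IsRegularParam θ) (z : (Fin d → ℝ) × ℝ) (t : ℝ) :
    Fcomp θ (t • z).1 (t • z).2 =
      Fcomp θ 0 0 * Real.exp (quadPart θ z * t ^ 2 + linPart θ z * t) := by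
  have hν := hθ.2.2.ne'
  have hexp : ∀ A B C D E F G : ℝ, C + D = E + F + G →
      A * Real.exp C * (B * Real.exp D) = A * Real.exp E * (B * Real.exp F) * Real.exp G := by
    intro A B C D E F G h
    have : Real.exp C * Real.exp D = Real.exp E * Real.exp F * Real.exp G := by
      rw [← Real.exp_add, ← Real.exp_add, ← Real.exp_add, h]
    linear_combination A * B * this
  unfold Fcomp gaussd gauss1 quadPart linPart
  refine hexp _ _ _ _ _ _ _ ?_
  simp only [Prod.smul_fst, Prod.smul_snd, mulVec_sub, sub_dotProduct, dotProduct_sub,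
    mulVec_smul, smul_dotProduct, dotProduct_smul, smul_eq_mul, mulVec_zero, dotProduct_zero,
    zero_dotProduct, dotProduct_mulVec_comm_of_isSymm (isSymm_inv hθ.1) θ.1 z.1]
  field_simp
  ring

lemma isSymm_ext_of_quadratic {d : ℕ} {M N : Matrix (Fin d) (Fin d) ℝ} (hM : M.IsSymm)
    (hN : N.IsSymm) (h : ∀ x : Fin d → ℝ, x ⬝ᵥ (M *ᵥ x) = x ⬝ᵥ (N *ᵥ x)) : M = N := by
  have hpol : ∀ x y : Fin d → ℝ, x ⬝ᵥ (M *ᵥ y) = x ⬝ᵥ (N *ᵥ y) := by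
    intro x y
    have h1 := h (x + y)
    simp only [mulVec_add, add_dotProduct, dotProduct_add,
      dotProduct_mulVec_comm_of_isSymm hM y x, dotProduct_mulVec_comm_of_isSymm hN y x, h x,
      h y] at h1
    linarith
  ext i j
  simpa using hpol (Pi.single i 1) (Pi.single j 1)

lemma param_ext_of_parts {d : ℕ} {θ η : Param d} (hθ : IsRegularParam θ) (hη : IsRegularParam η)
    (hquad : ∀ z, quadPart θ z = quadPart η z) (hlin : ∀ z, linPart θ z = linPart η z) :
    θ = η := by
  obtain ⟨c, Γ, a, b, ν⟩ := θ
  obtain ⟨c', Γ', a', b', ν'⟩ := η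
  obtain ⟨hs, hp, hν⟩ := hθ
  obtain ⟨hs', hp', hν'⟩ := hη
  simp only [quadPart, linPart, Prod.forall] at *
  obtain rfl : ν = ν' := by
    have := hquad 0 1
    simp at this
    linarith
  obtain rfl : a = a' := by
    refine dotProduct_eq _ _ fun x => ?_
    have h1 := hquad x 1
    have h2 := hquad x (-1)
    field_simp at h1 h2
    linarith
  obtain rfl : b = b' := by
    have := hlin 0 1
    simp at this
    field_simp at this
    exact this
  have hinv : Γ⁻¹ = Γ'⁻¹ := by
    refine isSymm_ext_of_quadratic (isSymm_inv hs) (isSymm_inv hs') fun x => ?_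
    have := hquad x 0
    linarith
  have hu : IsUnit Γ.det := hp.det_pos.ne'.isUnit
  have hu' : IsUnit Γ'.det := hp'.det_pos.ne'.isUnit
  obtain rfl : Γ = Γ' := by
    rw [← nonsing_inv_nonsing_inv Γ hu, hinv, nonsing_inv_nonsing_inv Γ' hu']
  obtain rfl : c = c' := by
    have h1 : Γ⁻¹ *ᵥ c = Γ⁻¹ *ᵥ c' := by
      refine dotProduct_eq _ _ fun x => ?_
      have := hlin x 0
      rw [dotProduct_comm, dotProduct_comm _ x]
      linarith
    have h2 := congrArg (Γ *ᵥ ·) h1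
    simpa [mulVec_mulVec, mul_nonsing_inv Γ hu] using h2
  rfl

lemma exists_forall_analytic_ne_zero {E κ : Type*} [NormedAddCommGroup E] [NormedSpace ℝ E]
    [CompleteSpace E] [Countable κ] (f : κ → E → ℝ)
    (hf : ∀ i, AnalyticOnNhd ℝ (f i) Set.univ) (hne : ∀ i, ∃ z, f i z ≠ 0) :
    ∃ z, ∀ i, f i z ≠ 0 := by
  have hdense : Dense (⋂ i, {z | f i z ≠ 0}) := by
    refine dense_iInter_of_isOpen (fun i => ?_) fun i => ?_
    · exact isOpen_ne_fun (continuousOn_univ.1 (hf i).continuousOn) continuous_const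
    · rw [← Set.compl_ofPred, ← interior_eq_empty_iff_dense_compl, Set.eq_empty_iff_forall_notMem]
      intro z hz
      obtain ⟨u, hu⟩ := hne i
      have hev : f i =ᶠ[𝓝 z] fun _ => 0 := mem_interior_iff_mem_nhds.1 hz
      exact hu (congrFun ((hf i).eq_of_eventuallyEq (fun _ _ => analyticAt_const) hev) u)
  obtain ⟨z, hz⟩ := hdense.nonempty
  exact ⟨z, fun i => Set.mem_iInter.1 hz i⟩

lemma analyticOnNhd_fst_apply {d : ℕ} (i : Fin d) (s : Set ((Fin d → ℝ) × ℝ)) :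
    AnalyticOnNhd ℝ (fun z : (Fin d → ℝ) × ℝ => z.1 i) s :=
  ContinuousLinearMap.analyticOnNhd
    ((ContinuousLinearMap.proj (R := ℝ) (φ := fun _ : Fin d => ℝ) i).comp
      (ContinuousLinearMap.fst ℝ (Fin d → ℝ) ℝ)) s

lemma analyticOnNhd_quadPart {d : ℕ} (θ : Param d) :
    AnalyticOnNhd ℝ (quadPart θ) Set.univ := by
  intro z _
  have h := fun i : Fin d => analyticOnNhd_fst_apply i Set.univ z (Set.mem_univ z)
  have hsnd : AnalyticAt ℝ (fun w : (Fin d → ℝ) × ℝ => w.2) z := analyticAt_snd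
  unfold quadPart
  simp only [dotProduct, mulVec, div_eq_mul_inv]
  fun_prop

lemma analyticOnNhd_linPart {d : ℕ} (θ : Param d) :
    AnalyticOnNhd ℝ (linPart θ) Set.univ := by
  intro z _
  have h := fun i : Fin d => analyticOnNhd_fst_apply i Set.univ z (Set.mem_univ z)
  have hsnd : AnalyticAt ℝ (fun w : (Fin d → ℝ) × ℝ => w.2) z := analyticAt_snd
  unfold linPart
  simp only [dotProduct, mulVec, div_eq_mul_inv]
  fun_prop

open Classical in
lemma Fcomp_identifiable {d : ℕ} {ι : Type*} [Fintype ι] (c : ι → ℝ) (θ : ι → Param d)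
    (hθ : ∀ i, IsRegularParam (θ i))
    (h : ∀ z : (Fin d → ℝ) × ℝ, ∑ i, c i * Fcomp (θ i) z.1 z.2 = 0) (i₀ : ι) :
    ∑ i with θ i = θ i₀, c i = 0 := by
  obtain ⟨z, hz⟩ := exists_forall_analytic_ne_zero
    (κ := {ij : ι × ι // θ ij.1 ≠ θ ij.2})
    (fun ij z => (quadPart (θ ij.1.1) z - quadPart (θ ij.1.2) z) ^ 2 +
      (linPart (θ ij.1.1) z - linPart (θ ij.1.2) z) ^ 2)
    (fun ij => (((analyticOnNhd_quadPart _).sub (analyticOnNhd_quadPart _)).pow 2).add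
      (((analyticOnNhd_linPart _).sub (analyticOnNhd_linPart _)).pow 2))
    (fun ij => by
      by_contra! hall
      refine ij.2 (param_ext_of_parts (hθ _) (hθ _) (fun z => ?_) fun z => ?_)
      · nlinarith [hall z, sq_nonneg (quadPart (θ ij.1.1) z - quadPart (θ ij.1.2) z),
          sq_nonneg (linPart (θ ij.1.1) z - linPart (θ ij.1.2) z)]
      · nlinarith [hall z, sq_nonneg (quadPart (θ ij.1.1) z - quadPart (θ ij.1.2) z),
          sq_nonneg (linPart (θ ij.1.1) z - linPart (θ ij.1.2) z)])
  have hiff : ∀ i, (quadPart (θ i) z = quadPart (θ i₀) z ∧ linPart (θ i) z = linPart (θ i₀) z) ↔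
      θ i = θ i₀ := by
    refine fun i => ⟨fun hi => ?_, fun hi => by rw [hi]; exact ⟨rfl, rfl⟩⟩
    by_contra hne
    exact hz ⟨(i, i₀), hne⟩ (by simp [hi.1, hi.2])
  have key := sum_coeff_eq_zero_of_sum_exp_quadratic (fun i => c i * Fcomp (θ i) 0 0)
    (fun i => quadPart (θ i) z) (fun i => linPart (θ i) z) (fun t => by
      refine Eq.trans (Finset.sum_congr rfl fun i _ => ?_) (h (t • z))
      rw [Fcomp_smul (hθ i), mul_assoc]) i₀
  simp only [hiff] at key
  have hfac : ∑ i with θ i = θ i₀, c i * Fcomp (θ i) 0 0 =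
      (∑ i with θ i = θ i₀, c i) * Fcomp (θ i₀) 0 0 := by
    rw [Finset.sum_mul]
    exact Finset.sum_congr rfl fun i hi => by rw [(Finset.mem_filter.1 hi).2]
  exact (mul_eq_zero.1 (hfac ▸ key)).resolve_right (Fcomp_pos (hθ i₀) 0 0).ne'

/-! ### Continuity and integrability of the component densities -/

lemma continuous_Fcomp {d : ℕ} (θ : Param d) :
    Continuous (fun z : (Fin d → ℝ) × ℝ => Fcomp θ z.1 z.2) := by
  unfold Fcomp gaussd gauss1
  simp only [dotProduct, mulVec, div_eq_mul_inv]
  fun_prop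

lemma continuousAt_Fcomp_param {d : ℕ} {θ : Param d} (hθ : IsRegularParam θ) (x : Fin d → ℝ)
    (y : ℝ) : ContinuousAt (fun η : Param d => Fcomp η x y) θ := by
  have hdet : θ.2.1.det ≠ 0 := hθ.2.1.det_pos.ne'
  have hν := hθ.2.2
  have hinv : ContinuousAt (fun η : Param d => η.2.1⁻¹) θ := by
    refine ContinuousAt.comp (f := fun η : Param d => η.2.1) (g := Inv.inv) ?_ (by fun_prop)
    refine continuousAt_matrix_inv _ ?_
    rw [Ring.inverse_eq_inv']
    exact continuousAt_inv₀ hdet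
  have hform : Continuous fun p : Matrix (Fin d) (Fin d) ℝ × (Fin d → ℝ) =>
      (x - p.2) ⬝ᵥ (p.1 *ᵥ (x - p.2)) := by
    have hsub : Continuous fun p : Matrix (Fin d) (Fin d) ℝ × (Fin d → ℝ) => x - p.2 := by
      fun_prop
    exact hsub.dotProduct (continuous_fst.matrix_mulVec hsub)
  have hquad : ContinuousAt
      (fun η : Param d => (x - η.1) ⬝ᵥ (η.2.1⁻¹ *ᵥ (x - η.1))) θ :=
    hform.continuousAt.comp (hinv.prodMk continuousAt_fst)
  have hd : ContinuousAt (fun η : Param d => η.2.1.det ^ (-(1 : ℝ) / 2)) θ :=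
    ContinuousAt.rpow_const
      ((continuous_fst.comp continuous_snd).matrix_det.continuousAt) (Or.inl hdet)
  have hv : ContinuousAt (fun η : Param d => (2 * Real.pi * η.2.2.2.2) ^ (-(1 : ℝ) / 2)) θ :=
    ContinuousAt.rpow_const (by fun_prop) (Or.inl (by positivity))
  have hres : ContinuousAt (fun η : Param d =>
      -((y - (η.2.2.1 ⬝ᵥ x + η.2.2.2.1)) ^ 2) / (2 * η.2.2.2.2)) θ := by
    refine ContinuousAt.div (Continuous.continuousAt ?_) (by fun_prop) (by positivity)
    simp only [dotProduct]
    fun_prop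
  exact ((hd.const_mul _).mul (hquad.const_mul _).rexp).mul (hv.mul hres.rexp)

lemma exists_pos_mul_norm_sq_le {d : ℕ} {M : Matrix (Fin d) (Fin d) ℝ} (hM : M.PosDef) :
    ∃ r : ℝ, 0 < r ∧ ∀ x : Fin d → ℝ, r * ‖x‖ ^ 2 ≤ x ⬝ᵥ (M *ᵥ x) := by
  have hcont : Continuous fun x : Fin d → ℝ => x ⬝ᵥ (M *ᵥ x) := by
    simp only [dotProduct, mulVec]
    fun_prop
  rcases (Metric.sphere (0 : Fin d → ℝ) 1).eq_empty_or_nonempty with he | hne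
  · refine ⟨1, one_pos, fun x => ?_⟩
    obtain rfl : x = 0 := by
      by_contra hx
      have : ‖x‖⁻¹ • x ∈ Metric.sphere (0 : Fin d → ℝ) 1 := by
        simp [norm_smul, norm_ne_zero_iff.2 hx]
      simp [he] at this
    simp
  · obtain ⟨u, hu, hmin⟩ := (isCompact_sphere (0 : Fin d → ℝ) 1).exists_isMinOn hne
      hcont.continuousOn
    have hu0 : u ≠ 0 := by
      rintro rfl
      simp at hu
    refine ⟨u ⬝ᵥ (M *ᵥ u), by simpa using hM.dotProduct_mulVec_pos hu0, fun x => ?_⟩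
    by_cases hx : x = 0
    · simp [hx]
    have hx' : ‖x‖ ≠ 0 := norm_ne_zero_iff.2 hx
    have hmem : ‖x‖⁻¹ • x ∈ Metric.sphere (0 : Fin d → ℝ) 1 := by simp [norm_smul, hx']
    have hle := isMinOn_iff.1 hmin _ hmem
    simp only [mulVec_smul, smul_dotProduct, dotProduct_smul, smul_eq_mul] at hle
    calc u ⬝ᵥ (M *ᵥ u) * ‖x‖ ^ 2
        ≤ ‖x‖⁻¹ * (‖x‖⁻¹ * x ⬝ᵥ (M *ᵥ x)) * ‖x‖ ^ 2 := by gcongr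
      _ = x ⬝ᵥ (M *ᵥ x) := by field_simp

lemma integrable_exp_neg_norm_sq (d : ℕ) (hd : 0 < d) {r : ℝ} (hr : 0 < r) :
    Integrable (fun x : Fin d → ℝ => Real.exp (-r * ‖x‖ ^ 2)) := by
  have hd' : (0 : ℝ) < d := by exact_mod_cast hd
  have hprod : Integrable (fun x : Fin d → ℝ => ∏ i, Real.exp (-(r / d) * x i ^ 2)) :=
    Integrable.fintype_prod (f := fun _ (v : ℝ) => Real.exp (-(r / d) * v ^ 2))
      fun _ => integrable_exp_neg_mul_sq (by positivity)
  refine hprod.mono' (by fun_prop) (Eventually.of_forall fun x => ?_)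
  rw [Real.norm_eq_abs, Real.abs_exp, ← Real.exp_sum, Real.exp_le_exp, ← Finset.mul_sum]
  have hle : ∑ i, x i ^ 2 ≤ d * ‖x‖ ^ 2 := by
    calc ∑ i, x i ^ 2 ≤ ∑ _i : Fin d, ‖x‖ ^ 2 := by
          refine Finset.sum_le_sum fun i _ => ?_
          rw [← sq_abs]
          exact pow_le_pow_left₀ (abs_nonneg _) (norm_le_pi_norm x i) 2
      _ = d * ‖x‖ ^ 2 := by simp
  have : r / d * ∑ i, x i ^ 2 ≤ r * ‖x‖ ^ 2 := by
    calc r / d * ∑ i, x i ^ 2 ≤ r / d * (d * ‖x‖ ^ 2) := by gcongr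
      _ = r * ‖x‖ ^ 2 := by field_simp
  linarith

lemma integrable_gaussd {d : ℕ} (hd : 0 < d) (c : Fin d → ℝ) {Γ : Matrix (Fin d) (Fin d) ℝ}
    (hΓ : Γ.PosDef) : Integrable (fun x => gaussd d x c Γ) := by
  obtain ⟨r, hr, hle⟩ := exists_pos_mul_norm_sq_le hΓ.inv
  have hcore : Integrable (fun x : Fin d → ℝ =>
      Real.exp (-(1 / 2) * (x ⬝ᵥ (Γ⁻¹ *ᵥ x)))) := by
    refine (integrable_exp_neg_norm_sq d hd (half_pos hr)).mono' ?_
      (Eventually.of_forall fun x => ?_)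
    · simp only [dotProduct, mulVec]
      fun_prop
    · rw [Real.norm_eq_abs, Real.abs_exp, Real.exp_le_exp]
      linarith [hle x]
  exact (hcore.comp_sub_right c).const_mul _

lemma integrable_gauss1 (b : ℝ) {ν : ℝ} (hν : 0 < ν) : Integrable (fun y => gauss1 y b ν) := by
  have h := ((integrable_exp_neg_mul_sq (b := 1 / (2 * ν)) (by positivity)).comp_sub_right
    b).const_mul ((2 * Real.pi * ν) ^ (-(1 : ℝ) / 2))
  refine h.congr (Eventually.of_forall fun y => ?_)
  simp only [gauss1]
  ring_nf

lemma integral_gauss1 (b ν : ℝ) : ∫ y, gauss1 y b ν = ∫ y, gauss1 y 0 ν := by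
  simpa [gauss1] using integral_sub_right_eq_self (μ := volume) (fun y => gauss1 y 0 ν) b

lemma integrable_Fcomp {d : ℕ} (hd : 0 < d) {θ : Param d} (hθ : IsRegularParam θ) :
    Integrable (fun z : (Fin d → ℝ) × ℝ => Fcomp θ z.1 z.2) := by
  rw [Measure.volume_eq_prod, integrable_prod_iff (continuous_Fcomp θ).aestronglyMeasurable]
  refine ⟨Eventually.of_forall fun x =>
    (integrable_gauss1 (θ.2.2.1 ⬝ᵥ x + θ.2.2.2.1) hθ.2.2).const_mul (gaussd d x θ.1 θ.2.1), ?_⟩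
  refine ((integrable_gaussd hd θ.1 hθ.2.1).mul_const (∫ y, gauss1 y 0 θ.2.2.2.2)).congr
    (Eventually.of_forall fun x => ?_)
  simp only [Real.norm_of_nonneg (Fcomp_pos hθ x _).le]
  simp only [Fcomp, integral_const_mul, integral_gauss1 (θ.2.2.1 ⬝ᵥ x + θ.2.2.2.1)]

/-! ### The parameter distance and the Voronoi loss near `G0` -/

lemma continuous_vnorm {d : ℕ} : Continuous (vnorm : (Fin d → ℝ) → ℝ) := by
  unfold vnorm
  fun_prop

lemma continuous_mnorm {d : ℕ} : Continuous (mnorm : Matrix (Fin d) (Fin d) ℝ → ℝ) := by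
  unfold mnorm
  refine Real.continuous_sqrt.comp (continuous_finsetSum _ fun i _ =>
    continuous_finsetSum _ fun j _ => (continuous_id.matrix_elem i j).pow 2)

lemma vnorm_zero {d : ℕ} : vnorm (0 : Fin d → ℝ) = 0 := by simp [vnorm]

lemma mnorm_zero {d : ℕ} : mnorm (0 : Matrix (Fin d) (Fin d) ℝ) = 0 := by simp [mnorm]

lemma vnorm_eq_zero {d : ℕ} {v : Fin d → ℝ} (h : vnorm v = 0) : v = 0 := by
  have h0 := (Real.sqrt_eq_zero (Finset.sum_nonneg fun i _ => sq_nonneg (v i))).1 h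
  rw [Finset.sum_eq_zero_iff_of_nonneg fun i _ => sq_nonneg (v i)] at h0
  ext i
  simpa using h0 i (Finset.mem_univ i)

lemma mnorm_eq_zero {d : ℕ} {M : Matrix (Fin d) (Fin d) ℝ} (h : mnorm M = 0) : M = 0 := by
  have hnn : ∀ i ∈ Finset.univ, 0 ≤ ∑ j, M i j ^ 2 := fun i _ =>
    Finset.sum_nonneg fun j _ => sq_nonneg (M i j)
  have h0 := (Real.sqrt_eq_zero (Finset.sum_nonneg hnn)).1 h
  rw [Finset.sum_eq_zero_iff_of_nonneg hnn] at h0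
  ext i j
  have h1 := h0 i (Finset.mem_univ i)
  rw [Finset.sum_eq_zero_iff_of_nonneg fun j _ => sq_nonneg (M i j)] at h1
  simpa using h1 j (Finset.mem_univ j)

lemma continuous_pdist_left {d : ℕ} (η : Param d) : Continuous (fun θ => pdist θ η) := by
  have h1 : Continuous fun θ : Param d => vnorm (θ.1 - η.1) :=
    continuous_vnorm.comp (by fun_prop)
  have h2 : Continuous fun θ : Param d => mnorm (θ.2.1 - η.2.1) :=
    continuous_mnorm.comp (by fun_prop)
  have h3 : Continuous fun θ : Param d => vnorm (θ.2.2.1 - η.2.2.1) :=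
    continuous_vnorm.comp (by fun_prop)
  unfold pdist
  fun_prop

lemma pdist_self {d : ℕ} (θ : Param d) : pdist θ θ = 0 := by
  simp [pdist, vnorm_zero, mnorm_zero]

lemma pdist_pos {d : ℕ} {θ η : Param d} (h : θ ≠ η) : 0 < pdist θ η := by
  refine (Real.sqrt_nonneg _).lt_of_ne' fun h0 => h ?_
  rw [Real.sqrt_eq_zero (by positivity)] at h0
  obtain ⟨c, Γ, a, b, ν⟩ := θ
  obtain ⟨c', Γ', a', b', ν'⟩ := η
  simp only at h0
  obtain ⟨e1, e2, e3, e4, e5⟩ : vnorm (c - c') = 0 ∧ mnorm (Γ - Γ') = 0 ∧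
      vnorm (a - a') = 0 ∧ b - b' = 0 ∧ ν - ν' = 0 := by
    have s1 := sq_nonneg (vnorm (c - c'))
    have s2 := sq_nonneg (mnorm (Γ - Γ'))
    have s3 := sq_nonneg (vnorm (a - a'))
    have s4 := sq_nonneg (b - b')
    have s5 := sq_nonneg (ν - ν')
    refine ⟨?_, ?_, ?_, ?_, ?_⟩ <;> refine (pow_eq_zero_iff two_ne_zero).1 ?_ <;> linarith
  rw [sub_eq_zero.1 (vnorm_eq_zero e1), sub_eq_zero.1 (mnorm_eq_zero e2),
    sub_eq_zero.1 (vnorm_eq_zero e3), sub_eq_zero.1 e4, sub_eq_zero.1 e5]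

open Classical in
lemma eventually_cell_eq {d k0 m : ℕ} {θ0 : Fin k0 → Param d} (hinj : Function.Injective θ0)
    {θ : ℕ → Fin m → Param d} {θlim : Fin m → Param d}
    (hθ : ∀ i, Tendsto (fun n => θ n i) atTop (𝓝 (θlim i)))
    (hlim : ∀ i, ∃ j, θlim i = θ0 j) :
    ∀ᶠ n in atTop, ∀ j, cell θ0 (θ n) j = Finset.univ.filter (fun i => θlim i = θ0 j) := by
  have hnear : ∀ᶠ n in atTop, ∀ i j l, θlim i = θ0 j → l ≠ j →
      pdist (θ n i) (θ0 j) < pdist (θ n i) (θ0 l) := by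
    simp only [eventually_all]
    intro i j l hij hlj
    have h1 := ((continuous_pdist_left (θ0 j)).tendsto _).comp (hθ i)
    have h2 := ((continuous_pdist_left (θ0 l)).tendsto _).comp (hθ i)
    refine h1.eventually_lt h2 ?_
    rw [hij, pdist_self]
    exact pdist_pos (hinj.ne hlj.symm)
  filter_upwards [hnear] with n hn j
  ext i
  simp only [cell, Finset.mem_filter, Finset.mem_univ, true_and]
  refine ⟨fun h => ?_, fun h l hl => (hn i j l h hl).le⟩
  obtain ⟨j', hj'⟩ := hlim i
  by_contra hne
  have hjj : j' ≠ j := fun e => hne (e ▸ hj')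
  exact absurd (h j' hjj) (not_le.2 (hn i j' j hj' hjj.symm))

open Classical in
lemma tendsto_Dbar_zero {d k0 m : ℕ} {π0 : Fin k0 → ℝ} {θ0 : Fin k0 → Param d}
    (hinj : Function.Injective θ0) {w : ℕ → Fin m → ℝ} {wlim : Fin m → ℝ}
    {θ : ℕ → Fin m → Param d} {θlim : Fin m → Param d}
    (hw : ∀ i, Tendsto (fun n => w n i) atTop (𝓝 (wlim i)))
    (hθ : ∀ i, Tendsto (fun n => θ n i) atTop (𝓝 (θlim i)))
    (hlim : ∀ i, ∃ j, θlim i = θ0 j)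
    (hmass : ∀ j, ∑ i with θlim i = θ0 j, wlim i = π0 j) :
    Tendsto (fun n => Dbar π0 θ0 (w n) (θ n)) atTop (𝓝 0) := by
  have hvec : ∀ (f : Param d → (Fin d → ℝ)), Continuous f → ∀ i j, θlim i = θ0 j →
      Tendsto (fun n => vnorm (f (θ n i) - f (θ0 j))) atTop (𝓝 0) := by
    intro f hf i j hij
    have h : Continuous fun η => vnorm (f η - f (θ0 j)) := continuous_vnorm.comp (by fun_prop)
    simpa [hij, vnorm_zero, Function.comp_def] using (h.tendsto _).comp (hθ i)
  have hmat : ∀ i j, θlim i = θ0 j →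
      Tendsto (fun n => mnorm ((θ n i).2.1 - (θ0 j).2.1)) atTop (𝓝 0) := by
    intro i j hij
    have h : Continuous fun η : Param d => mnorm (η.2.1 - (θ0 j).2.1) :=
      continuous_mnorm.comp (by fun_prop)
    simpa [hij, mnorm_zero, Function.comp_def] using (h.tendsto _).comp (hθ i)
  have hreal : ∀ (f : Param d → ℝ), Continuous f → ∀ i j, θlim i = θ0 j →
      Tendsto (fun n => |f (θ n i) - f (θ0 j)|) atTop (𝓝 0) := by
    intro f hf i j hij
    have h : Continuous fun η => |f η - f (θ0 j)| := by fun_prop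
    simpa [hij, Function.comp_def] using (h.tendsto _).comp (hθ i)
  have hpow : ∀ {u : ℕ → ℝ} {r : ℝ}, 0 < r → Tendsto u atTop (𝓝 0) →
      Tendsto (fun n => u n ^ r) atTop (𝓝 0) := by
    intro u r hr hu
    simpa [Real.zero_rpow hr.ne'] using hu.rpow_const (p := r) (Or.inr hr.le)
  have hc : Continuous fun η : Param d => η.1 := by fun_prop
  have ha : Continuous fun η : Param d => η.2.2.1 := by fun_prop
  have hb : Continuous fun η : Param d => η.2.2.2.1 := by fun_prop
  have hν : Continuous fun η : Param d => η.2.2.2.2 := by fun_prop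
  let C : Fin k0 → Finset (Fin m) := fun j => Finset.univ.filter (fun i => θlim i = θ0 j)
  have hcell : ∀ᶠ n in atTop, ∀ j, cell θ0 (θ n) j = C j := eventually_cell_eq hinj hθ hlim
  have hC : ∀ {i j}, i ∈ C j → θlim i = θ0 j := fun hi => (Finset.mem_filter.1 hi).2
  have hwmul : ∀ {u : ℕ → ℝ} (i : Fin m), Tendsto u atTop (𝓝 0) →
      Tendsto (fun n => w n i * u n) atTop (𝓝 0) := by
    intro u i hu
    simpa using (hw i).mul hu
  have hadd : ∀ {u v : ℕ → ℝ}, Tendsto u atTop (𝓝 0) → Tendsto v atTop (𝓝 0) →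
      Tendsto (fun n => u n + v n) atTop (𝓝 0) := by
    intro u v hu hv
    simpa using hu.add hv
  have hsum : ∀ {κ : Type} (s : Finset κ) (u : κ → ℕ → ℝ),
      (∀ x ∈ s, Tendsto (u x) atTop (𝓝 0)) →
      Tendsto (fun n => ∑ x ∈ s, u x n) atTop (𝓝 0) := by
    intro κ s u hu
    simpa using tendsto_finsetSum s hu
  have hr : ∀ j, 0 < (rbar (C j).card : ℝ) := fun j => by exact_mod_cast rbar_pos _
  unfold Dbar
  refine hadd (hadd ?_ ?_) ?_
  · refine hsum _ _ fun j _ => ?_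
    suffices h : Tendsto (fun n => if 1 < (C j).card then ∑ i ∈ C j, w n i *
        (vnorm ((θ n i).1 - (θ0 j).1) ^ ((rbar (C j).card : ℝ))
          + mnorm ((θ n i).2.1 - (θ0 j).2.1) ^ ((rbar (C j).card : ℝ) / 2)
          + vnorm ((θ n i).2.2.1 - (θ0 j).2.2.1) ^ (2 : ℕ)
          + |(θ n i).2.2.2.1 - (θ0 j).2.2.2.1| ^ ((rbar (C j).card : ℝ))
          + |(θ n i).2.2.2.2 - (θ0 j).2.2.2.2| ^ ((rbar (C j).card : ℝ) / 2)) else 0)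
        atTop (𝓝 0) from
      h.congr' (hcell.mono fun n hn => by simp only [hn j])
    split_ifs
    · refine hsum _ _ fun i hi => hwmul i (hadd (hadd (hadd (hadd ?_ ?_) ?_) ?_) ?_)
      · exact hpow (hr j) (hvec _ hc i j (hC hi))
      · exact hpow (half_pos (hr j)) (hmat i j (hC hi))
      · simpa using (hvec _ ha i j (hC hi)).pow 2
      · exact hpow (hr j) (hreal _ hb i j (hC hi))
      · exact hpow (half_pos (hr j)) (hreal _ hν i j (hC hi))
    · exact tendsto_const_nhds
  · refine hsum _ _ fun j _ => ?_
    suffices h : Tendsto (fun n => if (C j).card = 1 then ∑ i ∈ C j, w n i *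
        (vnorm ((θ n i).1 - (θ0 j).1) + mnorm ((θ n i).2.1 - (θ0 j).2.1)
          + vnorm ((θ n i).2.2.1 - (θ0 j).2.2.1) + |(θ n i).2.2.2.1 - (θ0 j).2.2.2.1|
          + |(θ n i).2.2.2.2 - (θ0 j).2.2.2.2|) else 0) atTop (𝓝 0) from
      h.congr' (hcell.mono fun n hn => by simp only [hn j])
    split_ifs
    · exact hsum _ _ fun i hi => hwmul i (hadd (hadd (hadd (hadd (hvec _ hc i j (hC hi))
        (hmat i j (hC hi))) (hvec _ ha i j (hC hi))) (hreal _ hb i j (hC hi)))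
        (hreal _ hν i j (hC hi)))
    · exact tendsto_const_nhds
  · refine hsum _ _ fun j _ => ?_
    suffices h : Tendsto (fun n => |(∑ i ∈ C j, w n i) - π0 j|) atTop (𝓝 0) from
      h.congr' (hcell.mono fun n hn => by simp only [hn j])
    have h := ((tendsto_finsetSum (C j) fun i _ => hw i).sub_const (π0 j)).abs
    have h0 : ∑ i ∈ C j, wlim i - π0 j = 0 := sub_eq_zero.2 (hmass j)
    rwa [h0, abs_zero] at h

/-! ### Limits of mixtures with vanishing total variation distance -/

lemma mixture_eq_of_tendsto_TV_zero {d m : ℕ} (hd : 0 < d) {p0 : (Fin d → ℝ) × ℝ → ℝ}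
    (hp0c : Continuous p0) (hp0i : Integrable p0)
    {w : ℕ → Fin m → ℝ} {wlim : Fin m → ℝ}
    {θ : ℕ → Fin m → Param d} {θlim : Fin m → Param d}
    (hw : ∀ i, Tendsto (fun n => w n i) atTop (𝓝 (wlim i)))
    (hθ : ∀ i, Tendsto (fun n => θ n i) atTop (𝓝 (θlim i)))
    (hreg : ∀ n i, IsRegularParam (θ n i)) (hreglim : ∀ i, IsRegularParam (θlim i))
    (hTV : Tendsto (fun n => TV (fun z => ∑ i, w n i * Fcomp (θ n i) z.1 z.2) p0)
      atTop (𝓝 0)) (z : (Fin d → ℝ) × ℝ) :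
    ∑ i, wlim i * Fcomp (θlim i) z.1 z.2 = p0 z := by
  let f : ℕ → (Fin d → ℝ) × ℝ → ℝ := fun n z =>
    |∑ i, w n i * Fcomp (θ n i) z.1 z.2 - p0 z|
  let g : (Fin d → ℝ) × ℝ → ℝ := fun z => |∑ i, wlim i * Fcomp (θlim i) z.1 z.2 - p0 z|
  have hfi : ∀ n, Integrable (f n) := fun n =>
    ((integrable_finsetSum _ fun i _ => (integrable_Fcomp hd (hreg n i)).const_mul _).sub
      hp0i).abs
  have hfc : ∀ n, Continuous (f n) := fun n =>
    ((continuous_finsetSum _ fun i _ => continuous_const.mul (continuous_Fcomp _)).sub hp0c).abs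
  have hgc : Continuous g :=
    ((continuous_finsetSum _ fun i _ => continuous_const.mul (continuous_Fcomp _)).sub hp0c).abs
  have hptw : ∀ z, Tendsto (fun n => f n z) atTop (𝓝 (g z)) := fun z =>
    ((tendsto_finsetSum _ fun i _ => (hw i).mul
      ((continuousAt_Fcomp_param (hreglim i) z.1 z.2).tendsto.comp (hθ i))).sub_const _).abs
  have hint : Tendsto (fun n => ∫ z, f n z) atTop (𝓝 0) := by
    have := hTV.const_mul 2
    simpa [TV, f] using this
  have hlint : Tendsto (fun n => ∫⁻ z, ENNReal.ofReal (f n z)) atTop (𝓝 0) := by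
    have h := (ENNReal.continuous_ofReal.tendsto _).comp hint
    rw [ENNReal.ofReal_zero] at h
    refine h.congr fun n => ?_
    exact ofReal_integral_eq_lintegral_ofReal (hfi n) (Eventually.of_forall fun z => abs_nonneg _)
  have hfatou : ∫⁻ z, ENNReal.ofReal (g z) ≤ 0 := by
    calc ∫⁻ z, ENNReal.ofReal (g z)
        = ∫⁻ z, liminf (fun n => ENNReal.ofReal (f n z)) atTop := by
          refine lintegral_congr fun z => ?_
          exact ((ENNReal.continuous_ofReal.tendsto _).comp (hptw z)).liminf_eq.symm
      _ ≤ liminf (fun n => ∫⁻ z, ENNReal.ofReal (f n z)) atTop :=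
          lintegral_liminf_le fun n => (hfc n).measurable.ennreal_ofReal
      _ = 0 := hlint.liminf_eq
  have hae := (lintegral_eq_zero_iff hgc.measurable.ennreal_ofReal).1 (nonpos_iff_eq_zero.1 hfatou)
  have hgae : g =ᵐ[volume] fun _ => 0 := hae.mono fun z hz =>
    le_antisymm (ENNReal.ofReal_eq_zero.1 hz) (abs_nonneg _)
  have hg := (hgc.ae_eq_iff_eq volume continuous_const).1 hgae
  exact sub_eq_zero.1 (abs_eq_zero.1 (congrFun hg z))

open Classical in
lemma mixing_measure_eq_of_mixture_eq {d k0 m : ℕ} {π0 : Fin k0 → ℝ} {θ0 : Fin k0 → Param d}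
    (hinj : Function.Injective θ0) (hreg0 : ∀ j, IsRegularParam (θ0 j))
    {w : Fin m → ℝ} {θ : Fin m → Param d} (hw : ∀ i, 0 < w i)
    (hreg : ∀ i, IsRegularParam (θ i))
    (h : ∀ z : (Fin d → ℝ) × ℝ, ∑ i, w i * Fcomp (θ i) z.1 z.2 =
      ∑ j, π0 j * Fcomp (θ0 j) z.1 z.2) :
    (∀ i, ∃ j, θ i = θ0 j) ∧ ∀ j, ∑ i with θ i = θ0 j, w i = π0 j := by
  have key : ∀ x : Fin m ⊕ Fin k0,
      ∑ i with θ i = Sum.elim θ θ0 x, w i = ∑ j with θ0 j = Sum.elim θ θ0 x, π0 j := by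
    intro x
    have h1 := Fcomp_identifiable (Sum.elim w fun j => -π0 j) (Sum.elim θ θ0)
      (by rintro (i | j); exacts [hreg i, hreg0 j])
      (fun z => by simp [Fintype.sum_sum_type, h z]) x
    rw [Finset.sum_filter, Fintype.sum_sum_type] at h1
    have h2 : ∑ i with θ i = Sum.elim θ θ0 x, w i + ∑ j with θ0 j = Sum.elim θ θ0 x, -π0 j = 0 := by
      rw [Finset.sum_filter, Finset.sum_filter]
      exact h1
    rwa [Finset.sum_neg_distrib, ← sub_eq_add_neg, sub_eq_zero] at h2
  refine ⟨fun i => ?_, fun j => ?_⟩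
  · by_contra! hne
    have h1 := key (Sum.inl i)
    rw [Sum.elim_inl, Finset.filter_false_of_mem (s := (Finset.univ : Finset (Fin k0)))
      (fun j _ => (hne j).symm), Finset.sum_empty] at h1
    have hpos : 0 < ∑ i' with θ i' = θ i, w i' :=
      Finset.sum_pos (fun i' _ => hw i') ⟨i, by simp⟩
    exact hpos.ne' h1
  · exact (key (Sum.inr j)).trans (by simp [hinj.eq_iff, Finset.filter_eq'])

lemma exists_TV_lower_bound_of_card {d k0 : ℕ} (hd : 0 < d) (m : ℕ)
    {Θ : Set (Param d)} (hΘc : IsCompact Θ) (hΘ : ∀ θ ∈ Θ, IsRegularParam θ)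
    {β : ℝ} (hβ : 0 < β) {π0 : Fin k0 → ℝ} {θ0 : Fin k0 → Param d}
    (hθ0Θ : ∀ j, θ0 j ∈ Θ) (hinj : Function.Injective θ0) {ε : ℝ} (hε : 0 < ε) :
    ∃ δ : ℝ, 0 < δ ∧ ∀ (w : Fin m → ℝ) (θ : Fin m → Param d), (∀ i, θ i ∈ Θ) →
      (∀ i, β ≤ w i) → (∑ i, w i) = 1 → ε < Dbar π0 θ0 w θ →
      δ ≤ TV (fun z => ∑ i, w i * Fcomp (θ i) z.1 z.2)
        (fun z => ∑ j, π0 j * Fcomp (θ0 j) z.1 z.2) := by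
  by_contra! hcon
  choose w θ hθΘ hwβ hwsum hD hTV using fun n : ℕ =>
    hcon (1 / ((n : ℝ) + 1)) Nat.one_div_pos_of_nat
  have : FirstCountableTopology (Matrix (Fin d) (Fin d) ℝ) :=
    inferInstanceAs (FirstCountableTopology (Fin d → Fin d → ℝ))
  have hK : IsCompact ((Set.univ.pi fun _ : Fin m => Set.Icc β 1) ×ˢ
      (Set.univ.pi fun _ : Fin m => Θ)) :=
    (isCompact_univ_pi fun _ => isCompact_Icc).prod (isCompact_univ_pi fun _ => hΘc)
  obtain ⟨⟨wlim, θlim⟩, ⟨hwlim, hθlim⟩, φ, hφ, hlim⟩ := hK.tendsto_subseq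
    (x := fun n => (w n, θ n)) (fun n => ⟨fun i _ => ⟨hwβ n i, by
      rw [← hwsum n]
      exact Finset.single_le_sum (fun i _ => hβ.le.trans (hwβ n i)) (Finset.mem_univ i)⟩,
      fun i _ => hθΘ n i⟩)
  have hwt : ∀ i, Tendsto (fun n => w (φ n) i) atTop (𝓝 (wlim i)) :=
    tendsto_pi_nhds.1 hlim.fst_nhds
  have hθt : ∀ i, Tendsto (fun n => θ (φ n) i) atTop (𝓝 (θlim i)) :=
    tendsto_pi_nhds.1 hlim.snd_nhds
  have hreglim : ∀ i, IsRegularParam (θlim i) := fun i => hΘ _ (hθlim i (Set.mem_univ i))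
  have hreg0 : ∀ j, IsRegularParam (θ0 j) := fun j => hΘ _ (hθ0Θ j)
  have hTV0 : Tendsto (fun n => TV (fun z => ∑ i, w n i * Fcomp (θ n i) z.1 z.2)
      (fun z => ∑ j, π0 j * Fcomp (θ0 j) z.1 z.2)) atTop (𝓝 0) :=
    squeeze_zero (fun n => mul_nonneg (by norm_num) (integral_nonneg fun z => abs_nonneg _))
      (fun n => (hTV n).le) tendsto_one_div_add_atTop_nhds_zero_nat
  have heq := mixture_eq_of_tendsto_TV_zero hd
    (continuous_finsetSum _ fun j _ => continuous_const.mul (continuous_Fcomp (θ0 j)))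
    (integrable_finsetSum _ fun j _ => (integrable_Fcomp hd (hreg0 j)).const_mul (π0 j))
    hwt hθt (fun n i => hΘ _ (hθΘ (φ n) i)) hreglim (hTV0.comp hφ.tendsto_atTop)
  obtain ⟨hatoms, hmass⟩ := mixing_measure_eq_of_mixture_eq hinj hreg0
    (fun i => hβ.trans_le (hwlim i (Set.mem_univ i)).1) hreglim heq
  have hD0 := tendsto_Dbar_zero hinj hwt hθt hatoms hmass
  exact absurd (ge_of_tendsto' hD0 fun n => (hD (φ n)).le) (not_le.2 hε)

/-- **Global lower bound in Theorem 1's proof.** In the Type I setting (all true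
location parameters `c_j^0` non-zero), for every `ε > 0` the infimum of
`V(p_G, p_{G0})` over all `G ∈ O_{k,β}(Θ)` with `D̄(G, G0) > ε` is strictly positive. -/
theorem typeI_global_lower_bound
    (d k0 k : ℕ) (hd : 0 < d) (hk0 : 0 < k0) (hk : k0 < k)
    (Θ : Set (Param d)) (hΘc : IsCompact Θ)
    (hΘ : ∀ θ ∈ Θ, (θ.2.1).IsSymm ∧ (θ.2.1).PosDef ∧ 0 < θ.2.2.2.2)
    (β : ℝ) (hβ : 0 < β) (hβk : β ≤ 1 / (k : ℝ))
    (π0 : Fin k0 → ℝ) (θ0 : Fin k0 → Param d)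
    (hθ0Θ : ∀ j, θ0 j ∈ Θ) (hθ0inj : Function.Injective θ0)
    (hπ0 : ∀ j, 0 < π0 j) (hπ0sum : ∑ j, π0 j = 1)
    (hc0 : ∀ j, (θ0 j).1 ≠ 0) :
    ∀ ε : ℝ, 0 < ε →
      ∃ δ : ℝ, 0 < δ ∧
        ∀ (m : ℕ) (w : Fin m → ℝ) (θ : Fin m → Param d),
          1 ≤ m → m ≤ k → (∀ i, θ i ∈ Θ) → Function.Injective θ →
          (∀ i, β ≤ w i) → (∑ i, w i) = 1 →
          ε < Dbar π0 θ0 w θ →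
          δ ≤ TV (fun z => ∑ i, w i * Fcomp (θ i) z.1 z.2)
                 (fun z => ∑ j, π0 j * Fcomp (θ0 j) z.1 z.2) := by
  intro ε hε
  choose δ hδ hbound using fun m : ℕ =>
    exists_TV_lower_bound_of_card hd m hΘc hΘ hβ (π0 := π0) hθ0Θ hθ0inj hε
  refine ⟨(Finset.range (k + 1)).inf' ⟨0, by simp⟩ δ,
    (Finset.lt_inf'_iff _).2 fun m _ => hδ m, ?_⟩
  intro m w θ _ hmk hθΘ _ hw hwsum hD
  exact (Finset.inf'_le δ (Finset.mem_range.2 (by omega))).trans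
    (hbound m w θ hθΘ hw hwsum hD)
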